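/- Let n ≥ 1 and let F = n^{-1/2} · Σ_{j=1}^n w_j τ(w_j^{(0)}), where w_1,…,w_n, w_1^{(0)},…,w_n^{(0)} are i.i.d. standard Gaussian random variables and τ ∈ C²(ℝ) satisfies |τ(x)| ≤ a + b|x|^γ, |τ'(x)| ≤ a + b|x|^γ and |τ''(x)| ≤ a + b|x|^γ for all x ∈ ℝ, for some constants a, b, γ ≥ 0. Let σ² = E[τ²(Z)] where Z ~ N(0,1), and let N ~ N(0, σ²). Then for every n ≥ 1, d_{TV}(F, N) ≤ (1/√n) · (4/σ²) · √(3(1+√2)) · ‖a + b|Z|^γ‖_{L⁴}², where ‖X‖_{L⁴} = (E[X⁴])^{1/4}. -/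

import Mathlib

open MeasureTheory ProbabilityTheory Real

/-- The total variation distance between two distributions:
`sup_B |P(X ∈ B) − P(Y ∈ B)|` over Borel (measurable) sets `B`. -/
noncomputable def dTV {E : Type*} [MeasurableSpace E] (μ ν : Measure E) : ℝ :=
  ⨆ B : {B : Set E // MeasurableSet B}, |(μ B.1).toReal - (ν B.1).toReal|

/-!
Given the hidden weights `y`, the output `n^{-1/2} ∑ w_j f(y_j)` is centred Gaussian with variance
`V(y) = n⁻¹ ∑ f(y_j)²`, so its law is a mixture of the measures `N(0, V(y))`. For `u ≤ v` the
density of `N(m, u)` is at most `√(v/u)` times that of `N(m, v)`, whence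
`d_TV(N(m, r), N(m, s)) ≤ |r - s| / s`. Averaging this over `y` with `s = E V`, and using
`E|V - E V| ≤ √(Var V)` and `Var V = Var(f²) / n`, bounds the distance to `N(0, E f²)` by
`√(Var(f²) / n) / E f²`; finally `Var(f²) ≤ E G⁴` whenever `|f| ≤ G`.
-/

open scoped BigOperators NNReal ENNReal

section TotalVariation

variable {E : Type*} [MeasurableSpace E]

lemma dTV_le_of_forall {μ ν : Measure E} {c : ℝ}
    (h : ∀ B, MeasurableSet B → |μ.real B - ν.real B| ≤ c) : dTV μ ν ≤ c :=
  haveI : Nonempty {B : Set E // MeasurableSet B} := ⟨⟨∅, .empty⟩⟩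
  ciSup_le fun B ↦ h B.1 B.2

lemma abs_measureReal_sub_le_dTV (μ ν : Measure E) [IsFiniteMeasure μ] [IsFiniteMeasure ν]
    {B : Set E} (hB : MeasurableSet B) : |μ.real B - ν.real B| ≤ dTV μ ν := by
  refine le_ciSup (f := fun B : {B : Set E // MeasurableSet B} ↦ |μ.real B.1 - ν.real B.1|)
    ⟨max (μ.real Set.univ) (ν.real Set.univ), ?_⟩ ⟨B, hB⟩
  rintro _ ⟨A, rfl⟩
  exact abs_sub_le_of_nonneg_of_le
    measureReal_nonneg (le_max_of_le_left (measureReal_mono (Set.subset_univ _)))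
    measureReal_nonneg (le_max_of_le_right (measureReal_mono (Set.subset_univ _)))

lemma dTV_self (μ : Measure E) : dTV μ μ = 0 := by
  simp [dTV]

lemma dTV_comm (μ ν : Measure E) : dTV μ ν = dTV ν μ := by
  simp only [dTV, abs_sub_comm]

lemma dTV_le_one_sub_of_forall_mul_le {μ ν : Measure E} [IsProbabilityMeasure μ]
    [IsProbabilityMeasure ν] {c : ℝ} (h : ∀ B, MeasurableSet B → c * μ.real B ≤ ν.real B) :
    dTV μ ν ≤ 1 - c := by
  have hc : c ≤ 1 := by simpa using h Set.univ .univ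
  have sub_le (B : Set E) (hB : MeasurableSet B) : μ.real B - ν.real B ≤ 1 - c := by
    have hμB : μ.real B ≤ 1 := measureReal_le_one
    nlinarith [h B hB]
  refine dTV_le_of_forall fun B hB ↦ abs_le.2 ⟨?_, sub_le B hB⟩
  have hcompl := sub_le Bᶜ hB.compl
  rw [probReal_compl_eq_one_sub hB, probReal_compl_eq_one_sub hB] at hcompl
  linarith

section Mixture

variable {α β : Type*} [MeasurableSpace α] [MeasurableSpace β] {μ : Measure α} {ν : Measure β}
  {F : α × β → E} {B : Set E}

lemma measureReal_map_prodMk_right (hF : Measurable F) (hB : MeasurableSet B) (y : β) :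
    (μ.map fun x ↦ F (x, y)).real B = μ.real ((fun x ↦ (x, y)) ⁻¹' (F ⁻¹' B)) :=
  map_measureReal_apply (hF.comp measurable_prodMk_right) hB

variable [IsFiniteMeasure μ]

lemma integrable_measureReal_map_prodMk_right [IsFiniteMeasure ν] (hF : Measurable F)
    (hB : MeasurableSet B) : Integrable (fun y ↦ (μ.map fun x ↦ F (x, y)).real B) ν := by
  simp only [measureReal_map_prodMk_right hF hB]
  exact Measure.integrable_measure_prodMk_left (measurable_swap (hF hB)) (measure_ne_top _ _)

lemma measureReal_map_prod_eq_integral [SFinite ν] (hF : Measurable F) (hB : MeasurableSet B) :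
    ((μ.prod ν).map F).real B = ∫ y, (μ.map fun x ↦ F (x, y)).real B ∂ν := by
  simp only [measureReal_map_prodMk_right hF hB]
  rw [map_measureReal_apply hF hB, measureReal_def, Measure.prod_apply_symm (hF hB)]
  exact (integral_toReal (measurable_measure_prodMk_right (hF hB)).aemeasurable
    (.of_forall fun y ↦ measure_lt_top _ _)).symm

lemma dTV_map_prod_le_integral [IsProbabilityMeasure ν] (hF : Measurable F) {ρ : Measure E}
    [IsFiniteMeasure ρ] {g : β → ℝ} (hg : Integrable g ν)
    (hFg : ∀ᵐ y ∂ν, dTV (μ.map fun x ↦ F (x, y)) ρ ≤ g y) :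
    dTV ((μ.prod ν).map F) ρ ≤ ∫ y, g y ∂ν := by
  refine dTV_le_of_forall fun B hB ↦ ?_
  have hsection := integrable_measureReal_map_prodMk_right (μ := μ) (ν := ν) hF hB
  calc |((μ.prod ν).map F).real B - ρ.real B|
      = |∫ y, ((μ.map fun x ↦ F (x, y)).real B - ρ.real B) ∂ν| := by
        rw [measureReal_map_prod_eq_integral hF hB, integral_sub hsection (integrable_const _)]
        simp
    _ ≤ ∫ y, |(μ.map fun x ↦ F (x, y)).real B - ρ.real B| ∂ν := abs_integral_le_integral_abs
    _ ≤ ∫ y, g y ∂ν := by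
        refine integral_mono_ae (hsection.sub (integrable_const _)).abs hg ?_
        filter_upwards [hFg] with y hy
        exact (abs_measureReal_sub_le_dTV _ _ hB).trans hy

end Mixture

end TotalVariation

lemma sqrt_div_mul_gaussianPDFReal_le (m : ℝ) {u v : ℝ≥0} (hu : u ≠ 0) (huv : u ≤ v) (x : ℝ) :
    √(u / v) * gaussianPDFReal m u x ≤ gaussianPDFReal m v x := by
  have hu_pos : (0 : ℝ) < u := by positivity
  have huv_real : (u : ℝ) ≤ v := huv
  have hv_pos : (0 : ℝ) < v := hu_pos.trans_le huv_real
  have hnormalization : √(u / v) * (√(2 * π * u))⁻¹ = (√(2 * π * v))⁻¹ := by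
    rw [← Real.sqrt_inv, ← Real.sqrt_inv, ← Real.sqrt_mul (by positivity)]
    congr 1
    field_simp
  rw [gaussianPDFReal, gaussianPDFReal, ← mul_assoc, hnormalization, neg_div, neg_div]
  gcongr

lemma sqrt_div_mul_gaussianReal_le (m : ℝ) {u v : ℝ≥0} (huv : u ≤ v) (B : Set ℝ) :
    √(u / v) * (gaussianReal m u).real B ≤ (gaussianReal m v).real B := by
  rcases eq_or_ne u 0 with rfl | hu
  · simp
  have hv : v ≠ 0 := (hu.bot_lt.trans_le huv).ne'
  have real_eq_integral {w : ℝ≥0} (hw : w ≠ 0) :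
      (gaussianReal m w).real B = ∫ x in B, gaussianPDFReal m w x := by
    rw [measureReal_def, gaussianReal_apply_eq_integral m hw,
      ENNReal.toReal_ofReal (integral_nonneg fun _ ↦ gaussianPDFReal_nonneg _ _ _)]
  rw [real_eq_integral hu, real_eq_integral hv, ← integral_const_mul]
  exact integral_mono ((integrable_gaussianPDFReal _ _).integrableOn.const_mul _)
    (integrable_gaussianPDFReal _ _).integrableOn (sqrt_div_mul_gaussianPDFReal_le m hu huv)

lemma dTV_gaussianReal_le_one_sub_div (m : ℝ) {u v : ℝ≥0} (huv : u ≤ v) :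
    dTV (gaussianReal m u) (gaussianReal m v) ≤ 1 - u / v := by
  have hdiv : (u / v : ℝ) ≤ √(u / v) :=
    Real.le_sqrt_of_sq_le (sq_le (by positivity) (div_le_one_of_le₀ huv v.2))
  have := dTV_le_one_sub_of_forall_mul_le fun B _ ↦ sqrt_div_mul_gaussianReal_le m huv B
  linarith

lemma dTV_gaussianReal_le (m : ℝ) (r : ℝ≥0) {s : ℝ≥0} (hs : s ≠ 0) :
    dTV (gaussianReal m r) (gaussianReal m s) ≤ |(r - s : ℝ)| / s := by
  have hs_pos : (0 : ℝ) < s := by positivity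
  rcases le_total r s with hrs | hsr
  · have hrs_real : (r : ℝ) ≤ s := hrs
    calc dTV (gaussianReal m r) (gaussianReal m s) ≤ 1 - r / s :=
          dTV_gaussianReal_le_one_sub_div m hrs
      _ = |(r - s : ℝ)| / s := by
          rw [abs_of_nonpos (sub_nonpos.2 hrs_real)]
          field_simp
          ring
  · have hsr_real : (s : ℝ) ≤ r := hsr
    have hr_pos : (0 : ℝ) < r := hs_pos.trans_le hsr_real
    calc dTV (gaussianReal m r) (gaussianReal m s) ≤ 1 - s / r :=
          dTV_comm (gaussianReal m r) _ ▸ dTV_gaussianReal_le_one_sub_div m hsr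
      _ = (r - s) / r := by field_simp
      _ ≤ (r - s) / s := by gcongr
      _ = |(r - s : ℝ)| / s := by rw [abs_of_nonneg (sub_nonneg.2 hsr_real)]

lemma ae_dTV_gaussianReal_integral_le {Ω : Type*} [MeasurableSpace Ω] {μ : Measure Ω} (m : ℝ)
    {V : Ω → ℝ} (hV : Integrable V μ) (hV_nonneg : 0 ≤ V) :
    ∀ᵐ ω ∂μ, dTV (gaussianReal m (V ω).toNNReal) (gaussianReal m (∫ ω, V ω ∂μ).toNNReal)
      ≤ |V ω - ∫ ω, V ω ∂μ| / ∫ ω, V ω ∂μ := by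
  rcases (integral_nonneg hV_nonneg).eq_or_lt with hzero | hpos
  · filter_upwards [(integral_eq_zero_iff_of_nonneg hV_nonneg hV).1 hzero.symm] with ω hω
    simp [← hzero, hω, dTV_self]
  · refine .of_forall fun ω ↦ ?_
    simpa [Real.coe_toNNReal _ (hV_nonneg ω), Real.coe_toNNReal _ hpos.le] using
      dTV_gaussianReal_le m (V ω).toNNReal (Real.toNNReal_pos.2 hpos).ne'

lemma map_sum_mul_pi_gaussianReal {ι : Type*} [Fintype ι] (m : ι → ℝ) (v : ι → ℝ≥0)
    (c : ι → ℝ) :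
    (Measure.pi fun i ↦ gaussianReal (m i) (v i)).map (fun w ↦ ∑ i, c i * w i)
      = gaussianReal (∑ i, c i * m i) (∑ i, c i ^ 2 * v i).toNNReal := by
  set P := Measure.pi fun i ↦ gaussianReal (m i) (v i)
  have hcoord (i : ι) : MeasurePreserving (fun w : ι → ℝ ↦ w i) P (gaussianReal (m i) (v i)) :=
    measurePreserving_eval _ i
  have hlaw (i : ι) : HasGaussianLaw (fun w : ι → ℝ ↦ c i * w i) P :=
    (hcoord i).hasLaw.hasGaussianLaw.fun_smul (c i)
  have hindep : iIndepFun (fun i (w : ι → ℝ) ↦ c i * w i) P :=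
    iIndepFun_pi (X := fun i x ↦ c i * x) fun i ↦ by fun_prop
  have hmean : ∫ w, ∑ i, c i * w i ∂P = ∑ i, c i * m i := by
    rw [integral_finsetSum _ fun i _ ↦ (hlaw i).integrable]
    refine Finset.sum_congr rfl fun i _ ↦ ?_
    rw [integral_const_mul, (hcoord i).hasLaw.integral_eq, integral_id_gaussianReal]
  have hvar : Var[fun w ↦ ∑ i, c i * w i; P] = ∑ i, c i ^ 2 * v i := by
    rw [← Finset.sum_fn, IndepFun.variance_sum (fun i _ ↦ (hlaw i).memLp_two)
      fun i _ j _ hij ↦ hindep.indepFun hij]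
    refine Finset.sum_congr rfl fun i _ ↦ ?_
    rw [variance_const_mul, (hcoord i).hasLaw.variance_eq, variance_id_gaussianReal]
  rw [(hindep.hasGaussianLaw_fun_sum hlaw).map_eq_gaussianReal, hmean, hvar]

lemma memLp_const_add_mul_abs_rpow_gaussianReal (m : ℝ) (v : ℝ≥0) (a b : ℝ) {γ : ℝ}
    (hγ : 0 ≤ γ) {p : ℝ≥0∞} (hp : p ≠ ∞) :
    MemLp (fun z : ℝ ↦ a + b * |z| ^ γ) p (gaussianReal m v) := by
  have hpow : MemLp (fun z : ℝ ↦ |z| ^ γ) p (gaussianReal m v) := by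
    rcases hγ.eq_or_lt with rfl | hγ_pos
    · simpa only [Real.rpow_zero] using memLp_const 1
    have := (memLp_id_gaussianReal' (μ := m) (v := v) (p * ENNReal.ofReal γ)
      (ENNReal.mul_ne_top hp ENNReal.ofReal_ne_top)).norm_rpow_div (ENNReal.ofReal γ)
    rwa [ENNReal.toReal_ofReal hγ, ENNReal.mul_div_cancel_right
      (ENNReal.ofReal_pos.2 hγ_pos).ne' ENNReal.ofReal_ne_top] at this
  exact (memLp_const a).add (hpow.const_mul b)

section SecondMoments

variable {E : Type*} [MeasurableSpace E] {ν : Measure E} {f : E → ℝ}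

lemma integrable_pow_four_of_memLp_four (hf : MemLp f 4 ν) : Integrable (fun x ↦ f x ^ 4) ν := by
  have := hf.integrable_norm_pow (p := 4) (by simp)
  simpa only [Real.norm_eq_abs, Even.pow_abs (show Even 4 by decide)] using this

lemma memLp_sq_of_memLp_four (hf : MemLp f 4 ν) : MemLp (fun x ↦ f x ^ 2) 2 ν := by
  refine (memLp_two_iff_integrable_sq (f := fun x ↦ f x ^ 2) (hf.aestronglyMeasurable.pow 2)).2 ?_
  simpa only [← pow_mul] using integrable_pow_four_of_memLp_four hf

variable [IsProbabilityMeasure ν]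

lemma integral_abs_sub_integral_le_sqrt_variance (hf : MemLp f 2 ν) :
    ∫ x, |f x - ∫ x, f x ∂ν| ∂ν ≤ √Var[f; ν] := by
  have hcentered : MemLp (fun x ↦ |f x - ∫ x, f x ∂ν|) 2 ν := (hf.sub (memLp_const _)).abs
  have hvariance := variance_nonneg (fun x ↦ |f x - ∫ x, f x ∂ν|) ν
  rw [variance_eq_sub hcentered] at hvariance
  simp only [Pi.pow_apply, sq_abs] at hvariance
  rw [← variance_eq_integral hf.aemeasurable] at hvariance
  exact Real.le_sqrt_of_sq_le (sub_nonneg.1 hvariance)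

lemma variance_sq_le_integral_pow_four {G : E → ℝ} (hf : AEStronglyMeasurable f ν)
    (hG : MemLp G 4 ν) (hfG : ∀ x, |f x| ≤ G x) :
    Var[fun x ↦ f x ^ 2; ν] ≤ ∫ x, G x ^ 4 ∂ν := by
  have hf4 : MemLp f 4 ν := hG.mono' hf (.of_forall fun x ↦ by simpa using hfG x)
  calc Var[fun x ↦ f x ^ 2; ν] ≤ ∫ x, (f x ^ 2) ^ 2 ∂ν :=
        variance_le_expectation_sq (X := fun x ↦ f x ^ 2) (hf.pow 2)
    _ = ∫ x, f x ^ 4 ∂ν := by simp only [← pow_mul]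
    _ ≤ ∫ x, G x ^ 4 ∂ν := by
        refine integral_mono (integrable_pow_four_of_memLp_four hf4)
          (integrable_pow_four_of_memLp_four hG) fun x ↦ ?_
        simpa only [Even.pow_abs (show Even 4 by decide)] using
          pow_le_pow_left₀ (abs_nonneg (f x)) (hfG x) 4

variable {ι : Type*} [Fintype ι] {g : E → ℝ}

lemma memLp_expect_eval {p : ℝ≥0∞} (hg : MemLp g p ν) :
    MemLp (fun y : ι → E ↦ 𝔼 i, g (y i)) p (Measure.pi fun _ ↦ ν) := by
  simp only [Fintype.expect_eq_sum_div_card, div_eq_mul_inv]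
  exact (memLp_finsetSum _ fun i _ ↦
    hg.comp_measurePreserving (measurePreserving_eval (fun _ ↦ ν) i)).mul_const _

lemma integral_expect_eval [Nonempty ι] (hg : Integrable g ν) :
    ∫ y : ι → E, 𝔼 i, g (y i) ∂Measure.pi (fun _ ↦ ν) = ∫ x, g x ∂ν := by
  simp only [Fintype.expect_eq_sum_div_card]
  rw [integral_div, integral_finsetSum _ fun i _ ↦ integrable_comp_eval hg]
  simp [integral_comp_eval (μ := fun _ : ι ↦ ν) hg.aestronglyMeasurable]

lemma variance_expect_eval (hg : MemLp g 2 ν) :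
    Var[fun y : ι → E ↦ 𝔼 i, g (y i); Measure.pi fun _ ↦ ν] = Var[g; ν] / Fintype.card ι := by
  have hsum := variance_sum_pi (ι := ι) (μ := fun _ ↦ ν) fun _ ↦ hg
  simp only [Fintype.expect_eq_sum_div_card, div_eq_inv_mul]
  rw [Finset.sum_fn, Finset.sum_const, Finset.card_univ, nsmul_eq_mul] at hsum
  rw [variance_const_mul, hsum]
  field_simp

end SecondMoments

lemma dTV_map_prod_gaussianReal_le {α β : Type*} [MeasurableSpace α] [MeasurableSpace β]
    {μ : Measure α} {ν : Measure β} [IsFiniteMeasure μ] [IsProbabilityMeasure ν] {F : α × β → ℝ}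
    (hF : Measurable F) {m : ℝ} {V : β → ℝ} (hV : MemLp V 2 ν) (hV_nonneg : 0 ≤ V)
    (hFV : ∀ y, μ.map (fun x ↦ F (x, y)) = gaussianReal m (V y).toNNReal) :
    dTV ((μ.prod ν).map F) (gaussianReal m (∫ y, V y ∂ν).toNNReal) ≤ √Var[V; ν] / ∫ y, V y ∂ν := by
  have hdeviation : Integrable (fun y ↦ |V y - ∫ y, V y ∂ν| / ∫ y, V y ∂ν) ν :=
    ((hV.sub (memLp_const _)).integrable one_le_two).abs.div_const _
  calc dTV ((μ.prod ν).map F) (gaussianReal m (∫ y, V y ∂ν).toNNReal)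
      ≤ ∫ y, |V y - ∫ y, V y ∂ν| / ∫ y, V y ∂ν ∂ν := by
        refine dTV_map_prod_le_integral hF hdeviation ?_
        simpa only [hFV] using
          ae_dTV_gaussianReal_integral_le m (hV.integrable one_le_two) hV_nonneg
    _ = (∫ y, |V y - ∫ y, V y ∂ν| ∂ν) / ∫ y, V y ∂ν := integral_div _ _
    _ ≤ √Var[V; ν] / ∫ y, V y ∂ν := by
        gcongr
        · exact integral_nonneg hV_nonneg
        · exact integral_abs_sub_integral_le_sqrt_variance hV

lemma map_inv_sqrt_mul_sum_mul_pi_gaussianReal (n : ℕ) (t : Fin n → ℝ) :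
    (Measure.pi fun _ : Fin n ↦ gaussianReal 0 1).map (fun w ↦ (√n)⁻¹ * ∑ j, w j * t j)
      = gaussianReal 0 (𝔼 j, t j ^ 2).toNNReal := by
  have hcoeff (w : Fin n → ℝ) : (√n)⁻¹ * ∑ j, w j * t j = ∑ j, ((√n)⁻¹ * t j) * w j := by
    rw [Finset.mul_sum]
    exact Finset.sum_congr rfl fun j _ ↦ by ring
  simp only [hcoeff]
  rw [map_sum_mul_pi_gaussianReal]
  simp [mul_pow, Fintype.expect_eq_sum_div_card, ← Finset.mul_sum, div_eq_inv_mul]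

lemma sqrt_div_div_le_inv_sqrt_mul {x M s t : ℝ} (hM : 0 ≤ M) (hxM : x ≤ M) (hs : 0 ≤ s)
    (ht : 0 ≤ t) :
    √(x / t) / s ≤ (√t)⁻¹ * (4 / s) * √(3 * (1 + √2)) * (M ^ ((1 : ℝ) / 4)) ^ 2 := by
  have hsqrt : (M ^ ((1 : ℝ) / 4)) ^ 2 = √M := by
    rw [← Real.rpow_mul_natCast hM, Real.sqrt_eq_rpow]
    norm_num
  have hconst : 1 ≤ √(3 * (1 + √2)) := Real.one_le_sqrt.2 (by linarith [Real.sqrt_nonneg 2])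
  calc √(x / t) / s ≤ √(M / t) / s := by gcongr
    _ = (√t)⁻¹ * (1 / s) * 1 * √M := by rw [Real.sqrt_div' _ ht]; ring
    _ ≤ (√t)⁻¹ * (4 / s) * √(3 * (1 + √2)) * √M := by gcongr; norm_num
    _ = (√t)⁻¹ * (4 / s) * √(3 * (1 + √2)) * (M ^ ((1 : ℝ) / 4)) ^ 2 := by rw [hsqrt]

theorem shallow_nn_tv_bound_general {E : Type*} [MeasurableSpace E] {ν : Measure E}
    [IsProbabilityMeasure ν] {f : E → ℝ} (hf : Measurable f) (hf4 : MemLp f 4 ν)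
    {n : ℕ} (hn : 1 ≤ n) :
    dTV
      (Measure.map
        (fun ω : (Fin n → ℝ) × (Fin n → E) ↦ (√n)⁻¹ * ∑ j, ω.1 j * f (ω.2 j))
        ((Measure.pi fun _ : Fin n ↦ gaussianReal 0 1).prod (Measure.pi fun _ : Fin n ↦ ν)))
      (gaussianReal 0 (∫ x, f x ^ 2 ∂ν).toNNReal)
      ≤ √(Var[fun x ↦ f x ^ 2; ν] / n) / ∫ x, f x ^ 2 ∂ν := by
  have : Nonempty (Fin n) := ⟨⟨0, hn⟩⟩
  have hf_sq : MemLp (fun x ↦ f x ^ 2) 2 ν := memLp_sq_of_memLp_four hf4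
  have hmixture := dTV_map_prod_gaussianReal_le
    (F := fun ω : (Fin n → ℝ) × (Fin n → E) ↦ (√n)⁻¹ * ∑ j, ω.1 j * f (ω.2 j)) (by fun_prop)
    (memLp_expect_eval hf_sq) (fun y ↦ Finset.expect_nonneg fun j _ ↦ sq_nonneg (f (y j)))
    fun y ↦ map_inv_sqrt_mul_sum_mul_pi_gaussianReal n fun j ↦ f (y j)
  rwa [variance_expect_eval hf_sq, integral_expect_eval (hf_sq.integrable one_le_two),
    Fintype.card_fin] at hmixture

theorem shallow_nn_tv_bound
    (τ : ℝ → ℝ) (a b γ : ℝ) (ha : 0 ≤ a) (hb : 0 ≤ b) (hγ : 0 ≤ γ)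
    (hτ : ContDiff ℝ 2 τ)
    (hτ0 : ∀ x : ℝ, |τ x| ≤ a + b * |x| ^ γ)
    (hτ1 : ∀ x : ℝ, |deriv τ x| ≤ a + b * |x| ^ γ)
    (hτ2 : ∀ x : ℝ, |deriv (deriv τ) x| ≤ a + b * |x| ^ γ)
    (n : ℕ) (hn : 1 ≤ n) :
    dTV
      (Measure.map
        (fun ω : (Fin n → ℝ) × (Fin n → ℝ) =>
          (Real.sqrt n)⁻¹ * ∑ j, ω.1 j * τ (ω.2 j))
        ((Measure.pi fun _ : Fin n => gaussianReal 0 1).prod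
          (Measure.pi fun _ : Fin n => gaussianReal 0 1)))
      (gaussianReal 0 (∫ z, (τ z) ^ 2 ∂gaussianReal 0 1).toNNReal)
      ≤ (Real.sqrt n)⁻¹
        * (4 / (∫ z, (τ z) ^ 2 ∂gaussianReal 0 1))
        * Real.sqrt (3 * (1 + Real.sqrt 2))
        * ((∫ z, (a + b * |z| ^ γ) ^ 4 ∂gaussianReal 0 1) ^ ((1:ℝ)/4)) ^ 2 := by
  have hG := memLp_const_add_mul_abs_rpow_gaussianReal 0 1 a b hγ (p := 4) (by simp)
  have hτ_meas : AEStronglyMeasurable τ (gaussianReal 0 1) := hτ.continuous.aestronglyMeasurable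
  exact (shallow_nn_tv_bound_general hτ.continuous.measurable
    (hG.mono' hτ_meas (.of_forall hτ0)) hn).trans
    (sqrt_div_div_le_inv_sqrt_mul (by positivity) (variance_sq_le_integral_pow_four hτ_meas hG hτ0)
      (by positivity) (by positivity))
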